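/- Let F be a proper 3-uniform hypergraph with v(F) vertices, let A ⊆ V(F) be nonempty, and let ε > 0. Then there is n0 ∈ ℕ such that the following holds for every n ≥ n0. Let H be a simplicial complex on n vertices satisfying (e³·n^{n−2}/(n+3)^n)·(ex^(3)(n,F) + n²) ≥ ((|A|−1)/|A| + (1/n)·(v(F)−|A|)/|A|)·(1 + Σ_{i≥2} Δ^(i+1)/i) (where e is Euler's number and the sum over i ≥ 2 is finite since Δ^(j) = 0 for j exceeding the largest edge size of H) and e(H) ≥ (1+ε)·(ex^(3)(n,F) + binom(n,2)). If either (1) H contains no edge of size 4, or (2) F is a subhypergraph of the complete 3-uniform hypergraph on 4 vertices, then H contains a copy of F^+. -/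

import Mathlib

open Finset

/-- `E` is the edge set of a simplicial complex: it is closed under taking subsets. -/
def IsComplex {α : Type*} [DecidableEq α] (E : Finset (Finset α)) : Prop :=
  ∀ e ∈ E, ∀ f ⊆ e, f ∈ E

/-- `H` contains a copy of `F`: an injection of the vertices mapping edges to edges. -/
def HasCopy {α β : Type*} [DecidableEq β]
    (F : Finset (Finset α)) (H : Finset (Finset β)) : Prop :=
  ∃ f : α → β, Function.Injective f ∧ ∀ e ∈ F, e.image f ∈ H

/-- downward closure of a family of sets -/
def dClosure {α : Type*} [DecidableEq α] (S : Finset (Finset α)) : Finset (Finset α) :=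
  S.biUnion Finset.powerset

/-- `ex(n,F)`: the extremal number for simplicial complexes -/
noncomputable def exSC {α : Type*} (n : ℕ) (F : Finset (Finset α)) : ℕ :=
  sSup {m | ∃ E : Finset (Finset (Fin n)), IsComplex E ∧ ¬ HasCopy F E ∧ E.card = m}

/-- `ex^(k)(n,F)`: the extremal number for `k`-uniform hypergraphs -/
noncomputable def exUnif {α : Type*} (k n : ℕ) (F : Finset (Finset α)) : ℕ :=
  sSup {m | ∃ E : Finset (Finset (Fin n)),
    (∀ e ∈ E, e.card = k) ∧ ¬ HasCopy F E ∧ E.card = m}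

/-- `d^(i)(xy)`: number of `i`-edges containing both `x` and `y` -/
def degPair {V : Type*} [DecidableEq V] (E : Finset (Finset V)) (i : ℕ) (x y : V) : ℕ :=
  (E.filter (fun e => e.card = i ∧ x ∈ e ∧ y ∈ e)).card

/-- `Δ^(i)`: maximum of `d^(i)(xy)` over pairs of distinct vertices -/
def maxPairDeg {V : Type*} [DecidableEq V] [Fintype V]
    (E : Finset (Finset V)) (i : ℕ) : ℕ :=
  (Finset.univ : Finset V).offDiag.sup (fun p => degPair E i p.1 p.2)

/-- a 3-uniform hypergraph `F` is proper -/
def IsProper {α : Type*} (F : Finset (Finset α)) : Prop :=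
  ∀ ε : ℝ, 0 < ε → ∃ n0 : ℕ, ∀ n : ℕ, n0 ≤ n →
    (1 + ε) * ((exUnif 3 n F : ℝ) - (exUnif 3 (n - 1) F : ℝ)) ≥ (exUnif 3 n F : ℝ) / n

/-- `F⁺`: downward closure of `F` together with a new vertex (`none`) joined by
2-edges to every vertex of `A` -/
def Fplus {α : Type*} [DecidableEq α] (F : Finset (Finset α)) (A : Finset α) :
    Finset (Finset (Option α)) :=
  dClosure ((F.image (Finset.image Option.some)) ∪
    A.image (fun x => ({Option.none, Option.some x} : Finset (Option α))))

/-
Delete, one at a time, the vertices with few neighbours. A vertex with `d` neighbours lies in at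
most `1 + d (1 + ∑ Δ^(i+1)/i)` edges, and the assumption on `Δ` makes the total loss at most about
`(ex(n, F) + n²) (1 - t²) / 2` when `tn` vertices survive. Since `F` is proper, `ex(tn, F)` is at
most about `t ex(n, F)`, and `t ≤ (1 + t²) / 2`, so the surviving complex still has enough edges
to contain a copy of `F`. All degrees in it exceed a proportion `(|A| - 1) / |A|` of the vertices,
so the images of the vertices of `A` have a common neighbour outside the copy.
-/

section Families

variable {α V : Type*}

lemma card_slice_le_choose {𝒜 : Finset (Finset V)} {W : Finset V} (hW : ∀ e ∈ 𝒜, e ⊆ W) (k : ℕ) :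
    #(𝒜.slice k) ≤ (#W).choose k := by
  rw [← card_powersetCard]
  refine card_le_card fun e he => ?_
  rw [mem_slice] at he
  exact mem_powersetCard.mpr ⟨hW e he.1, he.2⟩

lemma exists_notMem_forall_mem_of_card_lt {A : Finset α} {B W : Finset V} {N : α → Finset V}
    (hN : ∀ a ∈ A, N a ⊆ W) (h : #A * #W + #B < #W + ∑ a ∈ A, #(N a)) :
    ∃ y ∉ B, ∀ a ∈ A, y ∈ N a := by
  classical
  by_contra! hno
  have hcover : W ⊆ B ∪ A.biUnion fun a => W \ N a := by
    intro y hy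
    by_cases hyB : y ∈ B
    · exact mem_union_left _ hyB
    · obtain ⟨a, ha, hya⟩ := hno y hyB
      exact mem_union_right _ (mem_biUnion.mpr ⟨a, ha, mem_sdiff.mpr ⟨hy, hya⟩⟩)
  have hW : #W ≤ #B + ∑ a ∈ A, #(W \ N a) :=
    (card_le_card hcover).trans ((card_union_le _ _).trans (by gcongr; exact card_biUnion_le))
  have hsum : ∑ a ∈ A, #(W \ N a) + ∑ a ∈ A, #(N a) = #A * #W := by
    rw [← sum_add_distrib, ← smul_eq_mul]
    exact sum_eq_card_nsmul fun a ha => card_sdiff_add_card_eq_card (hN a ha)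
  omega

end Families

section Complexes

variable {V : Type*} [DecidableEq V] {E : Finset (Finset V)} {W : Finset V} {x y : V}

/-- The subcomplex of `E` induced on the vertex set `W`. -/
def induced (E : Finset (Finset V)) (W : Finset V) : Finset (Finset V) :=
  E.filter (· ⊆ W)

/-- The neighbours of `x`: the other vertices of the edges through `x`. In a complex these are the
`y ≠ x` for which `{x, y}` is an edge. -/
def neighbors (E : Finset (Finset V)) (x : V) : Finset V :=
  (E.memberSubfamily x).sup id

lemma mem_induced {e : Finset V} : e ∈ induced E W ↔ e ∈ E ∧ e ⊆ W :=
  mem_filter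

lemma induced_subset : induced E W ⊆ E :=
  filter_subset _ _

lemma isComplex_induced (hE : IsComplex E) (W : Finset V) : IsComplex (induced E W) := by
  intro e he f hf
  rw [mem_induced] at he ⊢
  exact ⟨hE e he.1 f hf, hf.trans he.2⟩

lemma mem_neighbors : y ∈ neighbors E x ↔ ∃ e ∈ E.memberSubfamily x, y ∈ e := by
  simp only [neighbors, mem_sup, id]

lemma notMem_neighbors_self : x ∉ neighbors E x := by
  rw [mem_neighbors]
  rintro ⟨e, he, hxe⟩
  exact (mem_memberSubfamily.mp he).2 hxe

lemma subset_neighbors {e : Finset V} (he : e ∈ E.memberSubfamily x) : e ⊆ neighbors E x :=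
  le_sup (f := id) he

lemma IsComplex.pair_mem (hE : IsComplex E) (hy : y ∈ neighbors E x) : {x, y} ∈ E := by
  obtain ⟨e, he, hye⟩ := mem_neighbors.mp hy
  refine hE _ (mem_memberSubfamily.mp he).1 _ ?_
  exact insert_subset_insert x (singleton_subset_iff.mpr hye)

lemma neighbors_induced_subset : neighbors (induced E W) x ⊆ W := by
  intro y hy
  obtain ⟨e, he, hye⟩ := mem_neighbors.mp hy
  exact (mem_induced.mp (mem_memberSubfamily.mp he).1).2 (mem_insert_of_mem hye)

lemma nonMemberSubfamily_induced : (induced E W).nonMemberSubfamily x = induced E (W.erase x) := by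
  ext e
  simp only [mem_nonMemberSubfamily, mem_induced, subset_erase, and_assoc]

lemma IsComplex.card_le_of_forall_card_ne (hE : IsComplex E) (hW : ∀ e ∈ E, e ⊆ W) {r : ℕ}
    (hr : ∀ e ∈ E, #e ≠ r + 1) : #E ≤ ∑ k ∈ range r, (#W).choose k + #(E.slice r) := by
  have hmaps : Set.MapsTo card (E : Set (Finset V)) (range (r + 1)) := by
    intro e he
    rw [mem_coe, mem_range]
    by_contra! hre
    obtain ⟨f, hfe, hf⟩ := exists_subset_card_eq hre
    exact hr f (hE e he f hfe) hf
  rw [card_eq_sum_card_fiberwise hmaps, sum_range_succ]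
  exact Nat.add_le_add_right (sum_le_sum fun k _ => card_slice_le_choose hW k) _

end Complexes

section Degrees

variable {V : Type*} [DecidableEq V] {E E' : Finset (Finset V)} {x y : V}

lemma card_memberSubfamily_le_two_pow : #(E.memberSubfamily x) ≤ 2 ^ #(neighbors E x) := by
  rw [← card_powerset]
  exact card_le_card fun e he => mem_powerset.mpr (subset_neighbors he)

lemma card_filter_slice_memberSubfamily_le_degPair (E : Finset (Finset V)) (x y : V) (i : ℕ) :
    #{e ∈ (E.memberSubfamily x).slice i | y ∈ e} ≤ degPair E (i + 1) x y := by
  refine card_le_card_of_injOn (insert x) (fun e he => ?_) fun e he f hf hef => ?_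
  · simp only [coe_filter, mem_slice, mem_memberSubfamily, Set.mem_ofPred_eq] at he ⊢
    obtain ⟨⟨⟨heE, hxe⟩, hi⟩, hye⟩ := he
    exact ⟨heE, by rw [card_insert_of_notMem hxe, hi], mem_insert_self x e,
      mem_insert_of_mem hye⟩
  · simp only [coe_filter, mem_slice, mem_memberSubfamily, Set.mem_ofPred_eq] at he hf
    rw [← erase_insert he.1.1.2, hef, erase_insert hf.1.1.2]

variable [Fintype V]

lemma degPair_le_maxPairDeg (i : ℕ) (h : x ≠ y) : degPair E i x y ≤ maxPairDeg E i :=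
  le_sup (f := fun p : V × V => degPair E i p.1 p.2) (b := (x, y)) (by simpa using h)

lemma maxPairDeg_mono (h : E ⊆ E') (i : ℕ) : maxPairDeg E i ≤ maxPairDeg E' i :=
  sup_mono_fun fun _ _ => card_le_card (filter_subset_filter _ h)

lemma card_slice_memberSubfamily_mul_le (E : Finset (Finset V)) (x : V) (i : ℕ) :
    #((E.memberSubfamily x).slice i) * i ≤ #(neighbors E x) * maxPairDeg E (i + 1) := by
  refine card_mul_le_card_mul (fun e y => y ∈ e) (fun e he => ?_) fun y hy => ?_
  · rw [mem_slice] at he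
    rw [← he.2]
    exact card_le_card fun y hy => mem_filter.mpr ⟨subset_neighbors he.1 hy, hy⟩
  · have hxy : x ≠ y := fun h => notMem_neighbors_self (h ▸ hy)
    exact (card_filter_slice_memberSubfamily_le_degPair E x y i).trans
      (degPair_le_maxPairDeg (i + 1) hxy)

/-- The factor `1 + ∑_{i ≥ 2} Δ^(i+1) / i`, which bounds the number of edges at a vertex per
neighbour of that vertex. -/
noncomputable def degreeFactor (E : Finset (Finset V)) : ℝ :=
  1 + ∑ i ∈ Icc 2 (Fintype.card V), (maxPairDeg E (i + 1) : ℝ) / i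

lemma degreeFactor_fin {n : ℕ} (E : Finset (Finset (Fin n))) :
    degreeFactor E = 1 + ∑ i ∈ Icc 2 n, (maxPairDeg E (i + 1) : ℝ) / i := by
  rw [degreeFactor, Fintype.card_fin]

lemma degreeFactor_nonneg (E : Finset (Finset V)) : 0 ≤ degreeFactor E := by
  unfold degreeFactor
  positivity

lemma degreeFactor_mono (h : E ⊆ E') : degreeFactor E ≤ degreeFactor E' := by
  unfold degreeFactor
  gcongr with i
  exact maxPairDeg_mono h (i + 1)

lemma card_memberSubfamily_le_degreeFactor (E : Finset (Finset V)) (x : V) :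
    (#(E.memberSubfamily x) : ℝ) ≤ 1 + #(neighbors E x) * degreeFactor E := by
  set L := E.memberSubfamily x
  have hsmall (i : ℕ) : #(L.slice i) ≤ (#(neighbors E x)).choose i :=
    card_slice_le_choose (fun _ => subset_neighbors) i
  have hlarge (i : ℕ) (hi : i ∈ Icc 2 (Fintype.card V)) :
      (#(L.slice i) : ℝ) ≤ #(neighbors E x) * (maxPairDeg E (i + 1) / i) := by
    have hi0 : (0 : ℝ) < i := by
      have := (mem_Icc.mp hi).1
      positivity
    rw [← mul_div_assoc, le_div_iff₀ hi0]
    exact_mod_cast card_slice_memberSubfamily_mul_le E x i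
  have hslices :
      #L ≤ #(L.slice 0) + (#(L.slice 1) + ∑ i ∈ Icc 2 (Fintype.card V), #(L.slice i)) := by
    rw [← sum_card_slice L, ← sum_insert (f := fun i => #(L.slice i)) (a := 1) (by simp),
      ← sum_insert (f := fun i => #(L.slice i)) (a := 0) (by simp)]
    refine sum_le_sum_of_subset fun i hi => ?_
    simp only [mem_Iic, mem_insert, mem_Icc] at hi ⊢
    omega
  have h0 : (#(L.slice 0) : ℝ) ≤ 1 := by
    exact_mod_cast (hsmall 0).trans_eq (Nat.choose_zero_right _)
  have h1 : (#(L.slice 1) : ℝ) ≤ #(neighbors E x) := by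
    exact_mod_cast (hsmall 1).trans_eq (Nat.choose_one_right _)
  calc (#L : ℝ) ≤ #(L.slice 0) +
          (#(L.slice 1) + ∑ i ∈ Icc 2 (Fintype.card V), (#(L.slice i) : ℝ)) := by
        exact_mod_cast hslices
    _ ≤ 1 + (#(neighbors E x) +
          ∑ i ∈ Icc 2 (Fintype.card V), #(neighbors E x) * ((maxPairDeg E (i + 1) : ℝ) / i)) := by
        gcongr with i hi
        exact hlarge i hi
    _ = 1 + #(neighbors E x) * degreeFactor E := by
        rw [← mul_sum, degreeFactor, mul_add, mul_one]

/-- For `a = 1` the factor `(a - 1) / a` vanishes and only the trivial bound `2 ^ c` is available;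
for `a ≥ 2` it is at least `1 / 2`, which absorbs the summand `c / a` of the degree bound. -/
lemma card_memberSubfamily_le_of_neighbors_le {a c w : ℕ} (ha : 1 ≤ a)
    (h : w + a * #(neighbors E x) ≤ a * w + c) :
    (#(E.memberSubfamily x) : ℝ) ≤
      ((a : ℝ) - 1) / a * degreeFactor E * (w + 2 * c) + 2 ^ c := by
  rcases ha.eq_or_lt with rfl | ha
  · have hd : #(neighbors E x) ≤ c := by omega
    have hpow : (#(E.memberSubfamily x) : ℝ) ≤ 2 ^ c := by
      exact_mod_cast card_memberSubfamily_le_two_pow.trans (Nat.pow_le_pow_right two_pos hd)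
    simpa using hpow
  · have ha2 : (2 : ℝ) ≤ a := by exact_mod_cast ha
    have hd : (#(neighbors E x) : ℝ) ≤ (a - 1) / a * (w + 2 * c) := by
      have h' : (w : ℝ) + a * #(neighbors E x) ≤ a * w + c := by exact_mod_cast h
      rw [div_mul_eq_mul_div, le_div_iff₀ (by linarith)]
      nlinarith [mul_nonneg (sub_nonneg.mpr ha2) (Nat.cast_nonneg (α := ℝ) c)]
    have hone : (1 : ℝ) ≤ 2 ^ c := one_le_pow₀ one_le_two
    have hmul := mul_le_mul_of_nonneg_right hd (degreeFactor_nonneg E)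
    linarith [card_memberSubfamily_le_degreeFactor E x]

end Degrees

section VertexDeletion

variable {V : Type*} [DecidableEq V]

theorem exists_subset_forall_not_of_card_memberSubfamily_le (E : Finset (Finset V)) (f : ℕ → ℝ)
    (bad : Finset V → V → Prop)
    (h : ∀ W, ∀ x ∈ W, bad W x → (#((induced E W).memberSubfamily x) : ℝ) ≤ f #W)
    (W : Finset V) :
    ∃ U ⊆ W, (∀ x ∈ U, ¬ bad U x) ∧
      (#(induced E W) : ℝ) ≤ #(induced E U) + ∑ k ∈ Ioc #U #W, f k := by
  induction W using Finset.strongInduction with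
  | H W ih =>
    by_cases hW : ∃ x ∈ W, bad W x
    · obtain ⟨x, hx, hbad⟩ := hW
      obtain ⟨U, hUW, hU, hle⟩ := ih _ (erase_ssubset hx)
      refine ⟨U, hUW.trans (erase_subset x W), hU, ?_⟩
      have hcard : #(W.erase x) + 1 = #W := card_erase_add_one hx
      have hsplit : (#((induced E W).memberSubfamily x) : ℝ) + #(induced E (W.erase x)) =
          #(induced E W) := by
        rw [← nonMemberSubfamily_induced]
        exact_mod_cast card_memberSubfamily_add_card_nonMemberSubfamily x (induced E W)
      rw [← hcard, sum_Ioc_succ_top (card_le_card hUW), hcard]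
      linarith [h W x hx hbad]
    · push Not at hW
      exact ⟨W, Subset.rfl, hW, by simp⟩

theorem exists_forall_lt_neighbors_induced [Fintype V] (E : Finset (Finset V)) {a : ℕ}
    (ha : 1 ≤ a) (c : ℕ) :
    ∃ W : Finset V, (∀ x ∈ W, a * #W + c < #W + a * #(neighbors (induced E W) x)) ∧
      (#E : ℝ) ≤ #(induced E W) + ∑ k ∈ Ioc #W (Fintype.card V),
        (((a : ℝ) - 1) / a * degreeFactor E * (k + 2 * c) + 2 ^ c) := by
  have ha' : (0 : ℝ) ≤ (a - 1) / a :=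
    div_nonneg (sub_nonneg.mpr (by exact_mod_cast ha)) (Nat.cast_nonneg a)
  obtain ⟨W, -, hW, hcard⟩ := exists_subset_forall_not_of_card_memberSubfamily_le E
    (fun k => ((a : ℝ) - 1) / a * degreeFactor E * (k + 2 * c) + 2 ^ c)
    (fun W x => #W + a * #(neighbors (induced E W) x) ≤ a * #W + c)
    (fun W x _ hbad => (card_memberSubfamily_le_of_neighbors_le ha hbad).trans (by
      gcongr
      exact degreeFactor_mono induced_subset)) univ
  have huniv : induced E univ = E := filter_true_of_mem fun e _ => subset_univ e
  rw [huniv, card_univ] at hcard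
  exact ⟨W, fun x hx => not_le.mp (hW x hx), hcard⟩

lemma sum_Ioc_affine (p q r : ℝ) {m n : ℕ} (h : m ≤ n) :
    ∑ k ∈ Ioc m n, (p * (k + q) + r) =
      p * (((n : ℝ) ^ 2 - m ^ 2) / 2 + (1 / 2 + q) * (n - m)) + r * (n - m) := by
  induction n, h using Nat.le_induction with
  | base => simp
  | succ n h ih =>
    rw [sum_Ioc_succ_top h, ih]
    push_cast
    ring

end VertexDeletion

section Copies

variable {α V : Type*} [DecidableEq V] {F : Finset (Finset α)} {E : Finset (Finset V)}
  {W : Finset V}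

/-- `E` contains a copy of `F` all of whose vertices, including those that lie in no edge of `F`,
belong to `W`. -/
def HasCopyOn (F : Finset (Finset α)) (E : Finset (Finset V)) (W : Finset V) : Prop :=
  ∃ f : α → V, Function.Injective f ∧ (∀ a, f a ∈ W) ∧ ∀ e ∈ F, e.image f ∈ E

lemma card_le_exUnif {k n : ℕ} {G : Finset (Finset (Fin n))} (hG : ∀ e ∈ G, #e = k)
    (hF : ¬ HasCopy F G) : #G ≤ exUnif k n F := by
  refine le_csSup ⟨#(univ : Finset (Finset (Fin n))), ?_⟩ ⟨G, hG, hF, rfl⟩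
  rintro _ ⟨G', -, -, rfl⟩
  exact card_le_card (subset_univ G')

lemma hasCopyOn_of_exUnif_lt {k : ℕ} (h : exUnif k #W F < #((induced E W).slice k)) :
    HasCopyOn F E W := by
  let g : Fin #W ↪ V := W.equivFin.symm.toEmbedding.trans (Function.Embedding.subtype (· ∈ W))
  have hg (i : Fin #W) : g i ∈ W := (W.equivFin.symm i).2
  have hgW : W ⊆ univ.map g := fun x hx =>
    mem_map.mpr ⟨W.equivFin ⟨x, hx⟩, mem_univ _, by simp [g]⟩
  let G : Finset (Finset (Fin #W)) := {e | #e = k ∧ e.map g ∈ E}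
  have hcard : #((induced E W).slice k) ≤ #G := by
    refine (card_le_card fun e he => ?_).trans (card_image_le (f := map g))
    obtain ⟨heW, hek⟩ := mem_slice.mp he
    rw [mem_induced] at heW
    obtain ⟨u, -, rfl⟩ := subset_map_iff.mp (heW.2.trans hgW)
    rw [card_map] at hek
    exact mem_image_of_mem _ (mem_filter.mpr ⟨mem_univ u, hek, heW.1⟩)
  obtain ⟨f, hf, hfG⟩ : HasCopy F G := by
    by_contra hF
    exact (h.trans_le hcard).not_ge (card_le_exUnif (fun e he => (mem_filter.mp he).2.1) hF)
  refine ⟨g ∘ f, g.injective.comp hf, fun a => hg (f a), fun e he => ?_⟩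
  rw [← image_image, ← map_eq_image]
  exact (mem_filter.mp (hfG e he)).2.2

lemma IsComplex.hasCopyOn_of_card_le [Fintype α] (hE : IsComplex E) {s : Finset V} (hs : s ∈ E)
    (hsW : s ⊆ W) (hcard : Fintype.card α ≤ #s) : HasCopyOn F E W := by
  obtain ⟨g⟩ : Nonempty (α ↪ s) := Function.Embedding.nonempty_of_card_le (by simpa using hcard)
  refine ⟨fun a => g a, Subtype.val_injective.comp g.injective, fun a => hsW (g a).2,
    fun e _ => hE s hs _ ?_⟩
  exact image_subset_iff.mpr fun a _ => (g a).2

theorem IsComplex.hasCopyOn_of_lt_card_induced [Fintype α] (hE : IsComplex E) {r : ℕ}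
    (hr : (∀ e ∈ E, #e ≠ r + 1) ∨ Fintype.card α ≤ r + 1)
    (hW : ∑ k ∈ range r, (#W).choose k + exUnif r #W F < #(induced E W)) :
    HasCopyOn F E W := by
  by_cases hlarge : ∃ s ∈ induced E W, #s = r + 1
  · obtain ⟨s, hs, hsr⟩ := hlarge
    rw [mem_induced] at hs
    have hα : Fintype.card α ≤ r + 1 := hr.resolve_left fun hne => hne s hs.1 hsr
    exact hE.hasCopyOn_of_card_le hs.1 hs.2 (hsr ▸ hα)
  · push Not at hlarge
    have hle := (isComplex_induced hE W).card_le_of_forall_card_ne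
      (fun e he => (mem_induced.mp he).2) hlarge
    exact hasCopyOn_of_exUnif_lt (k := r) (by omega)

variable [DecidableEq α] {A : Finset α}

lemma IsComplex.hasCopy_Fplus_of_pair_mem (hE : IsComplex E) {f : α → V}
    (hf : Function.Injective f) (hfF : ∀ e ∈ F, e.image f ∈ E) {y : V} (hy : ∀ a, f a ≠ y)
    (hyA : ∀ a ∈ A, {f a, y} ∈ E) : HasCopy (Fplus F A) E := by
  refine ⟨fun o => o.elim y f, ?_, fun e he => ?_⟩
  · rintro (_ | a) (_ | b) hab
    · rfl
    · exact absurd hab.symm (hy b)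
    · exact absurd hab (hy a)
    · exact congrArg some (hf hab)
  · obtain ⟨s, hs, hes⟩ := mem_biUnion.mp he
    refine hE (s.image fun o => o.elim y f) ?_ _ (image_subset_image (mem_powerset.mp hes))
    rcases mem_union.mp hs with hs | hs
    · obtain ⟨t, ht, rfl⟩ := mem_image.mp hs
      rw [image_image]
      exact hfF t ht
    · obtain ⟨a, ha, rfl⟩ := mem_image.mp hs
      rw [image_insert, image_singleton, pair_comm]
      exact hyA a ha

theorem HasCopyOn.hasCopy_Fplus [Fintype α] (hF : HasCopyOn F E W) (hE : IsComplex E)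
    (hA : A.Nonempty)
    (hW : ∀ x ∈ W, #A * #W + #Aᶜ < #W + #A * #(neighbors (induced E W) x)) :
    HasCopy (Fplus F A) E := by
  obtain ⟨f, hf, hfW, hfF⟩ := hF
  have hsum : #A * #W + #Aᶜ < #W + ∑ a ∈ A, #(neighbors (induced E W) (f a)) := by
    have := sum_lt_sum_of_nonempty hA fun a _ => hW (f a) (hfW a)
    rw [sum_const, smul_eq_mul, sum_add_distrib, sum_const, smul_eq_mul, ← mul_sum,
      ← mul_add] at this
    exact lt_of_mul_lt_mul_left' this
  obtain ⟨y, hyA, hy⟩ := exists_notMem_forall_mem_of_card_lt (B := Aᶜ.image f)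
    (fun a _ => neighbors_induced_subset)
    ((Nat.add_le_add_left card_image_le _).trans_lt hsum)
  refine hE.hasCopy_Fplus_of_pair_mem hf hfF (fun a hay => ?_)
    fun a ha => induced_subset ((isComplex_induced hE W).pair_mem (hy a ha))
  by_cases ha : a ∈ A
  · exact notMem_neighbors_self (hay ▸ hy a ha)
  · exact hyA (hay ▸ mem_image_of_mem f (mem_compl.mpr ha))

end Copies

section ProperHypergraphs

/-- The affine function `δ + (1 - δ) m / n` is chosen so that the growth condition at `n + 1`
carries the bound from `n` to `n + 1`. -/
lemma le_mul_of_growth {u : ℕ → ℝ} (hu : ∀ n, 0 ≤ u n) {δ : ℝ} (hδ : 0 ≤ δ) (hδ1 : δ ≤ 1) {m n : ℕ}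
    (hm : 0 < m) (hmn : m ≤ n)
    (hgrowth : ∀ k ≥ m, u (k + 1) / ((k + 1 : ℕ) : ℝ) ≤ (1 + δ) * (u (k + 1) - u k)) :
    u m ≤ (δ + (1 - δ) * (m / n)) * u n := by
  have hm' : (0 : ℝ) < m := by exact_mod_cast hm
  induction n, hmn using Nat.le_induction with
  | base => simp [hm'.ne']
  | succ n hmn ih =>
    have hmn' : (m : ℝ) ≤ n := by exact_mod_cast hmn
    have hn : (0 : ℝ) < n := hm'.trans_le hmn'
    have hstep : (1 + δ) * (n + 1) * u n ≤ ((1 + δ) * (n + 1) - 1) * u (n + 1) := by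
      have h := hgrowth n hmn
      rw [Nat.cast_succ, div_le_iff₀ (by positivity)] at h
      linarith
    have hcoeff : (δ * n + (1 - δ) * m) * ((1 + δ) * (n + 1) - 1) ≤
        (1 + δ) * n * (δ * (n + 1) + (1 - δ) * m) := by
      have : 0 ≤ δ * (n - (1 - δ) * m) := mul_nonneg hδ (by nlinarith)
      linarith
    have hsplit (k : ℝ) (hk : 0 < k) : δ + (1 - δ) * (m / k) = (δ * k + (1 - δ) * m) / k := by
      field_simp
    rw [hsplit n hn, div_mul_eq_mul_div, le_div_iff₀ hn] at ih
    rw [Nat.cast_succ, hsplit _ (by positivity), div_mul_eq_mul_div, le_div_iff₀ (by positivity)]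
    refine le_of_mul_le_mul_left ?_ (by positivity : 0 < (1 + δ) * n)
    have hweight : 0 ≤ δ * n + (1 - δ) * m :=
      add_nonneg (by positivity) (mul_nonneg (by linarith) hm'.le)
    calc (1 + δ) * n * (u m * (n + 1)) = (1 + δ) * (n + 1) * (u m * n) := by ring
      _ ≤ (1 + δ) * (n + 1) * ((δ * n + (1 - δ) * m) * u n) := by gcongr
      _ = (δ * n + (1 - δ) * m) * ((1 + δ) * (n + 1) * u n) := by ring
      _ ≤ (δ * n + (1 - δ) * m) * (((1 + δ) * (n + 1) - 1) * u (n + 1)) :=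
        mul_le_mul_of_nonneg_left hstep hweight
      _ ≤ (1 + δ) * n * (δ * (n + 1) + (1 - δ) * m) * u (n + 1) := by
        rw [← mul_assoc]
        exact mul_le_mul_of_nonneg_right hcoeff (hu _)
      _ = (1 + δ) * n * ((δ * (n + 1) + (1 - δ) * m) * u (n + 1)) := by ring

lemma IsProper.exUnif_le {α : Type*} {F : Finset (Finset α)} (hF : IsProper F) {δ : ℝ}
    (hδ : 0 < δ) :
    ∃ C : ℝ, ∀ m n : ℕ, m ≤ n → (exUnif 3 m F : ℝ) ≤ C + (δ + m / n) * exUnif 3 n F := by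
  have hγ0 : 0 < min δ 1 := lt_min hδ one_pos
  obtain ⟨N, hN⟩ := hF (min δ 1) hγ0
  refine ⟨∑ j ∈ range (N + 1), (exUnif 3 j F : ℝ), fun m n hmn => ?_⟩
  rcases le_or_gt m N with hm | hm
  · have hle := single_le_sum (f := fun j => (exUnif 3 j F : ℝ)) (fun _ _ => Nat.cast_nonneg _)
      (mem_range_succ_iff.mpr hm)
    exact le_add_of_le_of_nonneg hle (by positivity)
  · have hle := le_mul_of_growth (u := fun k => (exUnif 3 k F : ℝ)) (fun _ => Nat.cast_nonneg _)
      hγ0.le (min_le_right δ 1) (Nat.zero_lt_of_lt hm) hmn fun k hk => hN (k + 1) (by omega)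
    refine hle.trans (le_add_of_nonneg_of_le (by positivity) ?_)
    gcongr
    · exact min_le_left δ 1
    · exact mul_le_of_le_one_left (by positivity) (by linarith)

end ProperHypergraphs

section Estimates

open Filter

lemma deletion_loss_le {n m X p q δ κ : ℝ} (hm : 0 ≤ m) (hmn : m ≤ n) (hn : 0 < n) (hp : 0 ≤ p)
    (hq : 0 ≤ q) (hpn : p * n ^ 2 ≤ (1 + δ) * (X + n ^ 2)) (hqn : q ≤ κ * n) :
    p * ((n ^ 2 - m ^ 2) / 2 + q * (n - m)) ≤
      (1 + δ) * (X + n ^ 2) * ((1 - (m / n) ^ 2) / 2 + κ) := by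
  have hκ : 0 ≤ κ := nonneg_of_mul_nonneg_left (hq.trans hqn) hn
  have ht : (m / n) ^ 2 ≤ 1 := pow_le_one₀ (by positivity) ((div_le_one hn).mpr hmn)
  calc p * ((n ^ 2 - m ^ 2) / 2 + q * (n - m)) ≤ p * ((n ^ 2 - m ^ 2) / 2 + κ * n * n) := by
        gcongr
        linarith
    _ = p * n ^ 2 * ((1 - (m / n) ^ 2) / 2 + κ) := by field_simp
    _ ≤ (1 + δ) * (X + n ^ 2) * ((1 - (m / n) ^ 2) / 2 + κ) :=
        mul_le_mul_of_nonneg_right hpn (by linarith)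

/-- With `t = m / n`, the coefficient of `X` in the difference of the two sides is at least
`(1 - t) ^ 2 / 2` up to terms in `δ`, `ε` and `κ`, and the terms `t ^ 2 * n ^ 2 / 2` cancel. -/
lemma remaining_edges_lt {n m X Y e Q C L δ ε κ : ℝ} (hm : 0 ≤ m) (hmn : m ≤ n) (hn : 0 < n)
    (hX : 0 ≤ X) (hδ : 0 ≤ δ) (hκ : 4 * (2 + δ) * κ ≤ ε - δ) (hδε : δ < ε)
    (hY : Y ≤ C + (κ + m / n) * X)
    (hQ : Q ≤ (1 + δ) * (X + n ^ 2) * ((1 - (m / n) ^ 2) / 2 + κ) + L * n)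
    (he : (1 + ε) * (X + n * (n - 1) / 2) ≤ e + Q)
    (hlarge : (1 + ε + L) * n + (C + 1) < (ε - δ) / 4 * n ^ 2) :
    1 + m + m * (m - 1) / 2 + Y < e := by
  obtain ⟨t, rfl⟩ : ∃ t, m = t * n := ⟨m / n, by field_simp⟩
  rw [mul_div_cancel_right₀ t hn.ne'] at hY hQ
  have hXcoeff : 0 ≤ 1 + ε - (1 + δ) * ((1 - t ^ 2) / 2 + κ) - (κ + t) := by
    nlinarith [sq_nonneg (1 - t), mul_nonneg hδ (sq_nonneg t)]
  have hncoeff : (ε - δ) / 4 ≤ (1 + ε) / 2 - (1 + δ) * ((1 - t ^ 2) / 2 + κ) - t ^ 2 / 2 := by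
    nlinarith [mul_nonneg hδ (sq_nonneg t)]
  have hXterm := mul_nonneg hXcoeff hX
  have hnterm := mul_le_mul_of_nonneg_right hncoeff (sq_nonneg n)
  have hεn : 0 ≤ ε * n := by nlinarith
  linarith

lemma eventually_linear_lt_quadratic (b c : ℝ) {a : ℝ} (ha : 0 < a) :
    ∀ᶠ n : ℕ in atTop, b * n + c < a * (n : ℝ) ^ 2 := by
  have hlin : Tendsto (fun x : ℝ => a * x - b) atTop atTop :=
    tendsto_atTop_add_const_right _ _ (tendsto_id.const_mul_atTop ha)
  filter_upwards [((tendsto_id.atTop_mul_atTop₀ hlin).comp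
    tendsto_natCast_atTop_atTop).eventually_gt_atTop c] with n hn
  simp only [Function.comp_apply, id] at hn
  linarith

lemma eventually_exp_mul_pow_div_le {δ : ℝ} (hδ : 0 < δ) :
    ∀ᶠ n : ℕ in atTop,
      Real.exp 1 ^ 3 * (n : ℝ) ^ (n - 2) / ((n : ℝ) + 3) ^ n * (n : ℝ) ^ 2 ≤ 1 + δ := by
  have hlt : Real.exp 3 / (1 + δ) < Real.exp 3 :=
    div_lt_self (Real.exp_pos 3) (lt_add_of_pos_right 1 hδ)
  filter_upwards [(Real.tendsto_one_add_div_pow_exp 3).eventually_const_lt hlt,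
    eventually_ge_atTop 2] with n hexp hn
  have hn0 : (0 : ℝ) < n := by positivity
  have hbase : (n : ℝ) + 3 = (1 + 3 / n) * n := by field_simp
  have hexp3 : Real.exp 1 ^ 3 = Real.exp 3 := by
    rw [Real.exp_one_pow, Nat.cast_ofNat]
  rw [div_lt_iff₀ (by positivity)] at hexp
  rw [div_mul_eq_mul_div, mul_assoc, ← pow_add, Nat.sub_add_cancel hn, hexp3, hbase, mul_pow,
    div_le_iff₀ (by positivity), ← mul_assoc, mul_comm (1 + δ)]
  gcongr

lemma eventually_mul_sq_le_of_exp_coeff {δ : ℝ} (hδ : 0 < δ) :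
    ∀ᶠ n : ℕ in atTop, ∀ {x q s θ : ℝ}, 0 ≤ x → 0 ≤ q → 0 ≤ s →
      (θ + 1 / n * q) * s ≤ Real.exp 1 ^ 3 * (n : ℝ) ^ (n - 2) / ((n : ℝ) + 3) ^ n *
        (x + (n : ℝ) ^ 2) →
      θ * s * (n : ℝ) ^ 2 ≤ (1 + δ) * (x + (n : ℝ) ^ 2) := by
  filter_upwards [eventually_exp_mul_pow_div_le hδ] with n hn x q s θ hx hq hs h
  calc θ * s * (n : ℝ) ^ 2 ≤ (θ + 1 / n * q) * s * (n : ℝ) ^ 2 := by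
        gcongr
        exact le_add_of_nonneg_right (by positivity)
    _ ≤ Real.exp 1 ^ 3 * (n : ℝ) ^ (n - 2) / ((n : ℝ) + 3) ^ n * (x + (n : ℝ) ^ 2) *
          (n : ℝ) ^ 2 := by gcongr
    _ = Real.exp 1 ^ 3 * (n : ℝ) ^ (n - 2) / ((n : ℝ) + 3) ^ n * (n : ℝ) ^ 2 *
          (x + (n : ℝ) ^ 2) := by ring
    _ ≤ (1 + δ) * (x + (n : ℝ) ^ 2) := by gcongr

end Estimates

section MainTheorem

open Filter

theorem statement7_general {α : Type*} [DecidableEq α] [Fintype α] (F : Finset (Finset α))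
    (hproper : IsProper F) (A : Finset α) (hA : A.Nonempty) {δ ε : ℝ} (hδ : 0 ≤ δ) (hδε : δ < ε) :
    ∃ n0 : ℕ, ∀ n : ℕ, n0 ≤ n → ∀ (V : Type*) [DecidableEq V] [Fintype V], Fintype.card V = n →
      ∀ E : Finset (Finset V), IsComplex E →
      ((#A : ℝ) - 1) / #A * degreeFactor E * (n : ℝ) ^ 2 ≤
        (1 + δ) * ((exUnif 3 n F : ℝ) + (n : ℝ) ^ 2) →
      (1 + ε) * ((exUnif 3 n F : ℝ) + (n.choose 2 : ℝ)) ≤ #E →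
      ((∀ e ∈ E, #e ≠ 4) ∨ Fintype.card α ≤ 4) →
      HasCopy (Fplus F A) E := by
  obtain ⟨κ, hκ0, hκ⟩ : ∃ κ : ℝ, 0 < κ ∧ 4 * (2 + δ) * κ ≤ ε - δ :=
    ⟨(ε - δ) / (4 * (2 + δ)), div_pos (sub_pos.mpr hδε) (by positivity), by field_simp; rfl⟩
  obtain ⟨C, hC⟩ := hproper.exUnif_le hκ0
  obtain ⟨n0, hn0⟩ := eventually_atTop.mp ((eventually_gt_atTop 0).and
    (((tendsto_natCast_atTop_atTop.const_mul_atTop hκ0).eventually_ge_atTop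
      (1 / 2 + 2 * (#Aᶜ : ℝ))).and
    (eventually_linear_lt_quadratic (1 + ε + 2 ^ #Aᶜ) (C + 1) (a := (ε - δ) / 4) (by linarith))))
  refine ⟨n0, fun n hn V _ _ hV E hE hdeg hcard h4 => ?_⟩
  obtain ⟨hnpos, hqn, hlarge⟩ := hn0 n hn
  have hnpos' : (0 : ℝ) < n := by exact_mod_cast hnpos
  obtain ⟨W, hW, hEW⟩ := exists_forall_lt_neighbors_induced E hA.card_pos #Aᶜ
  have hWn : #W ≤ n := hV ▸ card_le_univ W
  have hWn' : (#W : ℝ) ≤ n := by exact_mod_cast hWn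
  rw [hV, sum_Ioc_affine _ _ _ hWn] at hEW
  refine (hE.hasCopyOn_of_lt_card_induced (r := 3) h4 ?_).hasCopy_Fplus hE hA hW
  have hθ : (0 : ℝ) ≤ (#A - 1) / #A :=
    div_nonneg (sub_nonneg.mpr (by exact_mod_cast hA.card_pos)) (Nat.cast_nonneg _)
  have hloss := deletion_loss_le (Nat.cast_nonneg #W) hWn' hnpos'
    (mul_nonneg hθ (degreeFactor_nonneg E)) (by positivity) hdeg hqn
  have hpow : (2 : ℝ) ^ #Aᶜ * (n - #W) ≤ 2 ^ #Aᶜ * n := by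
    gcongr
    exact sub_le_self _ (Nat.cast_nonneg _)
  rw [Nat.cast_choose_two] at hcard
  have hlt := remaining_edges_lt (Nat.cast_nonneg #W) hWn' hnpos' (Nat.cast_nonneg _) hδ hκ hδε
    (hC #W n hWn) (add_le_add hloss hpow) (hcard.trans hEW) hlarge
  rw [← Nat.cast_choose_two] at hlt
  simpa [sum_range_succ] using mod_cast hlt

theorem statement7 {α : Type*} [DecidableEq α] [Fintype α] (F : Finset (Finset α))
    (hunif : ∀ e ∈ F, e.card = 3) (hproper : IsProper F)
    (A : Finset α) (hA : A.Nonempty) (ε : ℝ) (hε : 0 < ε) :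
    ∃ n0 : ℕ, ∀ n : ℕ, n0 ≤ n → ∀ E : Finset (Finset (Fin n)),
      IsComplex E →
      Real.exp 1 ^ 3 * (n : ℝ) ^ (n - 2) / ((n : ℝ) + 3) ^ n *
          ((exUnif 3 n F : ℝ) + (n : ℝ) ^ 2) ≥
        (((A.card : ℝ) - 1) / (A.card : ℝ) +
            (1 / (n : ℝ)) * (((Fintype.card α : ℝ) - (A.card : ℝ)) / (A.card : ℝ))) *
          (1 + ∑ i ∈ Finset.Icc 2 n, (maxPairDeg E (i + 1) : ℝ) / (i : ℝ)) →
      (E.card : ℝ) ≥ (1 + ε) * ((exUnif 3 n F : ℝ) + (n.choose 2 : ℝ)) →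
      ((¬ ∃ e ∈ E, e.card = 4) ∨
        HasCopy F ((Finset.univ : Finset (Fin 4)).powersetCard 3)) →
      HasCopy (Fplus F A) E := by
  obtain ⟨n0, hn0⟩ := statement7_general F hproper A hA (half_pos hε).le (half_lt_self hε)
  obtain ⟨n1, hn1⟩ := eventually_atTop.mp (eventually_mul_sq_le_of_exp_coeff (half_pos hε))
  refine ⟨max n0 n1, fun n hn E hE hdeg hcard h4 => ?_⟩
  rw [max_le_iff] at hn
  rw [← degreeFactor_fin] at hdeg
  have hAα : (#A : ℝ) ≤ Fintype.card α := by exact_mod_cast card_le_univ A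
  refine hn0 n hn.1 (Fin n) (Fintype.card_fin n) E hE (hn1 n hn.2 (Nat.cast_nonneg _)
    (div_nonneg (sub_nonneg.mpr hAα) (Nat.cast_nonneg _)) (degreeFactor_nonneg E) hdeg) hcard
    (h4.imp (fun h e he h4 => h ⟨e, he, h4⟩) ?_)
  rintro ⟨f, hf, -⟩
  simpa using Fintype.card_le_of_injective f hf

end MainTheorem
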